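/- arXiv:1701.03253 — 10 statements merged into one kernel-verified Lean document; each statement's English description precedes it below -/
import Mathlib

section
/- For every ξ ∈ [0,1], the set { L1 : L1 ≥ 0 ∧ Rect(L1, 0, D(ξ)) ⊆ P } has a greatest element, and this greatest element equals (−2 · (h11·h22 − h12·h21) · min(ξ, 1 − ξ)) / max(h21, h22); i.e., L1max(ξ) = (−2 · (h11·h22 − h12·h21) · ξ) / max(h21, h22) for 0 ≤ ξ ≤ 1/2 and L1max(ξ) = (−2 · (h11·h22 − h12·h21) · (1 − ξ)) / max(h21, h22) for 1/2 ≤ ξ ≤ 1. (Proposition 1) -/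
/-!
In the coordinates `(s, t)` of the parallelogram, with `δ = h12·h21 − h11·h22 > 0`, the point
`D(ξ) + (u, 0)` is `(ξ − h22·u/δ, ξ + h21·u/δ)`. A horizontal segment `|u| ≤ L/2` therefore lies
in `P` exactly when `h22·L/2` and `h21·L/2` are both at most `δ·ξ` and `δ·(1 − ξ)`, that is, when
`L·max(h21, h22) ≤ 2·δ·min(ξ, 1 − ξ)`. The coordinate computation is `Dpt_add_mem_Pgram_iff`.
-/

noncomputable section

/-- The parallelogram `P = { (h11·s + h12·t, h21·s + h22·t) : s,t ∈ [0,1] }`. -/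
def Pgram (h11 h12 h21 h22 : ℝ) : Set (ℝ × ℝ) :=
  { v | ∃ s ∈ Set.Icc (0:ℝ) 1, ∃ t ∈ Set.Icc (0:ℝ) 1,
      v = (h11 * s + h12 * t, h21 * s + h22 * t) }

/-- The point `D(ξ)` on the diagonal of the parallelogram. -/
def Dpt (h11 h12 h21 h22 ξ : ℝ) : ℝ × ℝ := (ξ * (h11 + h12), ξ * (h21 + h22))

/-- Closed axis-aligned rectangle with horizontal side `L1`, vertical side `L2`, midpoint `c`. -/
def Rect (L1 L2 : ℝ) (c : ℝ × ℝ) : Set (ℝ × ℝ) :=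
  { v | |v.1 - c.1| ≤ L1 / 2 ∧ |v.2 - c.2| ≤ L2 / 2 }

/-- `L1max(ξ)`: sup of horizontal segment lengths centered at `D(ξ)` fitting inside `P`. -/
def L1max (h11 h12 h21 h22 ξ : ℝ) : ℝ :=
  sSup { L1 | L1 ≥ 0 ∧ Rect L1 0 (Dpt h11 h12 h21 h22 ξ) ⊆ Pgram h11 h12 h21 h22 }

/-- `L2(ξ, x)`: sup of vertical side lengths of rectangles with horizontal side `x`
centered at `D(ξ)` fitting inside `P`. -/
def L2fun (h11 h12 h21 h22 ξ x : ℝ) : ℝ :=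
  sSup { L2 | L2 ≥ 0 ∧ Rect x L2 (Dpt h11 h12 h21 h22 ξ) ⊆ Pgram h11 h12 h21 h22 }

/-- Rectangle with horizontal side `x` extended vertically upwards from `c` by `L2`. -/
def RectUp (x L2 : ℝ) (c : ℝ × ℝ) : Set (ℝ × ℝ) :=
  { v | |v.1 - c.1| ≤ x / 2 ∧ c.2 ≤ v.2 ∧ v.2 ≤ c.2 + L2 }

/-- Rectangle with horizontal side `x` extended vertically downwards from `c` by `L2`. -/
def RectDown (x L2 : ℝ) (c : ℝ × ℝ) : Set (ℝ × ℝ) :=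
  { v | |v.1 - c.1| ≤ x / 2 ∧ c.2 - L2 ≤ v.2 ∧ v.2 ≤ c.2 }

/-- `L2up(ξ, x)`: sup of upward one-sided vertical extensions. -/
def L2up (h11 h12 h21 h22 ξ x : ℝ) : ℝ :=
  sSup { L2 | L2 ≥ 0 ∧ RectUp x L2 (Dpt h11 h12 h21 h22 ξ) ⊆ Pgram h11 h12 h21 h22 }

/-- `L2down(ξ, x)`: sup of downward one-sided vertical extensions. -/
def L2down (h11 h12 h21 h22 ξ x : ℝ) : ℝ :=
  sSup { L2 | L2 ≥ 0 ∧ RectDown x L2 (Dpt h11 h12 h21 h22 ξ) ⊆ Pgram h11 h12 h21 h22 }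

/-- Membership in `P` of a horizontal translate of `D(ξ)`, with the coordinates `s`, `t` cleared of
the denominator `δ = h12·h21 − h11·h22`. -/
theorem Dpt_add_mem_Pgram_iff {h11 h12 h21 h22 : ℝ} (hdet : h11 * h22 - h12 * h21 < 0)
    (ξ u : ℝ) :
    (ξ * (h11 + h12) + u, ξ * (h21 + h22)) ∈ Pgram h11 h12 h21 h22 ↔
      (0 ≤ (h12 * h21 - h11 * h22) * ξ - h22 * u ∧
        (h12 * h21 - h11 * h22) * ξ - h22 * u ≤ h12 * h21 - h11 * h22) ∧
      (0 ≤ (h12 * h21 - h11 * h22) * ξ + h21 * u ∧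
        (h12 * h21 - h11 * h22) * ξ + h21 * u ≤ h12 * h21 - h11 * h22) := by
  obtain ⟨δ, hδ⟩ : ∃ δ, δ = h12 * h21 - h11 * h22 := ⟨_, rfl⟩
  rw [← hδ]
  have hδ0 : 0 < δ := by linarith
  constructor
  · rintro ⟨s, ⟨hs0, hs1⟩, t, ⟨ht0, ht1⟩, h⟩
    obtain ⟨hx, hy⟩ := Prod.mk.inj h
    -- Cramer's rule
    have hs : δ * ξ - h22 * u = δ * s := by
      rw [hδ]; linear_combination h12 * hy - h22 * hx
    have ht : δ * ξ + h21 * u = δ * t := by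
      rw [hδ]; linear_combination h21 * hx - h11 * hy
    rw [hs, ht]
    exact ⟨⟨by positivity, by nlinarith⟩, ⟨by positivity, by nlinarith⟩⟩
  · rintro ⟨⟨hs0, hs1⟩, ht0, ht1⟩
    refine ⟨(δ * ξ - h22 * u) / δ, ⟨by positivity, (div_le_one hδ0).2 hs1⟩,
      (δ * ξ + h21 * u) / δ, ⟨by positivity, (div_le_one hδ0).2 ht1⟩, ?_⟩
    ext
    · simp only
      field_simp
      rw [hδ]; ring
    · simp only
      field_simp
      ring

theorem stmt0 (h11 h12 h21 h22 : ℝ)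
    (hpos11 : 0 < h11) (hpos12 : 0 < h12) (hpos21 : 0 < h21) (hpos22 : 0 < h22)
    (hdet : h11 * h22 - h12 * h21 < 0) :
    ∀ ξ ∈ Set.Icc (0:ℝ) 1,
      IsGreatest
        { L1 | L1 ≥ 0 ∧ Rect L1 0 (Dpt h11 h12 h21 h22 ξ) ⊆ Pgram h11 h12 h21 h22 }
        ((-2 * (h11 * h22 - h12 * h21) * min ξ (1 - ξ)) / max h21 h22) ∧
      (ξ ≤ 1 / 2 →
        L1max h11 h12 h21 h22 ξ = (-2 * (h11 * h22 - h12 * h21) * ξ) / max h21 h22) ∧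
      (1 / 2 ≤ ξ →
        L1max h11 h12 h21 h22 ξ = (-2 * (h11 * h22 - h12 * h21) * (1 - ξ)) / max h21 h22) := by
  intro ξ hξ
  obtain ⟨hξ0, hξ1⟩ := hξ
  have hM : 0 < max h21 h22 := lt_max_of_lt_left hpos21
  have hm : 0 ≤ min ξ (1 - ξ) := le_min hξ0 (by linarith)
  have key : IsGreatest
      { L1 | L1 ≥ 0 ∧ Rect L1 0 (Dpt h11 h12 h21 h22 ξ) ⊆ Pgram h11 h12 h21 h22 }
      ((-2 * (h11 * h22 - h12 * h21) * min ξ (1 - ξ)) / max h21 h22) := by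
    constructor
    · refine ⟨div_nonneg (mul_nonneg (by linarith) hm) hM.le, ?_⟩
      rintro ⟨x, y⟩ ⟨hx, hy⟩
      simp only [Dpt] at hx hy
      have hy' : y = ξ * (h21 + h22) := by
        rw [zero_div] at hy
        linarith [abs_nonpos_iff.1 hy]
      obtain ⟨u, rfl⟩ : ∃ u, x = ξ * (h11 + h12) + u := ⟨x - ξ * (h11 + h12), by ring⟩
      rw [add_sub_cancel_left] at hx
      have hu : max h21 h22 * |u| ≤ (h12 * h21 - h11 * h22) * min ξ (1 - ξ) := by
        rw [div_div, le_div_iff₀ (by positivity)] at hx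
        linarith
      have h1 : h21 * |u| ≤ max h21 h22 * |u| := by gcongr; exact le_max_left _ _
      have h2 : h22 * |u| ≤ max h21 h22 * |u| := by gcongr; exact le_max_right _ _
      have hδ : 0 ≤ h12 * h21 - h11 * h22 := by linarith
      have h3 := mul_le_mul_of_nonneg_left (min_le_left ξ (1 - ξ)) hδ
      have h4 := mul_le_mul_of_nonneg_left (min_le_right ξ (1 - ξ)) hδ
      have h5 := mul_le_mul_of_nonneg_left (le_abs_self u) hpos21.le
      have h6 := mul_le_mul_of_nonneg_left (neg_abs_le u) hpos21.le
      have h7 := mul_le_mul_of_nonneg_left (le_abs_self u) hpos22.le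
      have h8 := mul_le_mul_of_nonneg_left (neg_abs_le u) hpos22.le
      rw [hy', Dpt_add_mem_Pgram_iff hdet]
      refine ⟨⟨?_, ?_⟩, ?_, ?_⟩ <;> linarith
    · rintro L ⟨hL, hsub⟩
      have hmem : ∀ u, |u| ≤ L / 2 →
          (ξ * (h11 + h12) + u, ξ * (h21 + h22)) ∈ Pgram h11 h12 h21 h22 := by
        intro u hu
        exact hsub ⟨by simpa [Dpt] using hu, by simp [Dpt]⟩
      have hL2 : (0 : ℝ) ≤ L / 2 := by linarith
      -- the two endpoints of the segment
      obtain ⟨⟨a1, a2⟩, a3, a4⟩ :=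
        (Dpt_add_mem_Pgram_iff hdet ξ _).1 (hmem (L / 2) (abs_of_nonneg hL2).le)
      obtain ⟨⟨b1, b2⟩, b3, b4⟩ :=
        (Dpt_add_mem_Pgram_iff hdet ξ _).1
          (hmem (-(L / 2)) (by rw [abs_neg, abs_of_nonneg hL2]))
      rw [le_div_iff₀ hM]
      rcases max_choice h21 h22 with h | h <;> rcases min_choice ξ (1 - ξ) with h' | h' <;>
        rw [h, h'] <;> linarith
  refine ⟨key, fun h => ?_, fun h => ?_⟩
  · rw [L1max, key.csSup_eq, min_eq_left (by linarith)]
  · rw [L1max, key.csSup_eq, min_eq_right (by linarith)]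
end
end

section
/- For every ξ ∈ [0,1], L1max(ξ) = L1max(1 − ξ). (Remark 1: the largest horizontal segment length centered at the point D(ξ) on the diagonal of P is symmetric about ξ = 1/2.) -/
/-!
The point reflection `v ↦ D(1) - v` through the centre of the parallelogram maps the parallelogram
to itself and the rectangle centred at `D(ξ)` to the one of the same size centred at `D(1 - ξ)`
(`rect_subset_reflect`). Hence `L1max ξ` and `L1max (1 - ξ)` are suprema of the same set.
-/

noncomputable section

/-- The point reflection `v ↦ D(1) - v` preserves the parallelogram (via `(s, t) ↦ (1 - s, 1 - t)`)
and exchanges the rectangles centred at `D(ξ)` and `D(1 - ξ)`. -/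
theorem rect_subset_reflect {h11 h12 h21 h22 ξ L1 L2 : ℝ}
    (h : Rect L1 L2 (Dpt h11 h12 h21 h22 ξ) ⊆ Pgram h11 h12 h21 h22) :
    Rect L1 L2 (Dpt h11 h12 h21 h22 (1 - ξ)) ⊆ Pgram h11 h12 h21 h22 := by
  rintro ⟨x, y⟩ ⟨hx, hy⟩
  simp only [Dpt] at hx hy
  have hmem : (h11 + h12 - x, h21 + h22 - y) ∈ Rect L1 L2 (Dpt h11 h12 h21 h22 ξ) := by
    simp only [Rect, Dpt, Set.mem_ofPred_eq]
    constructor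
    · rw [abs_sub_comm]; convert hx using 2; ring
    · rw [abs_sub_comm]; convert hy using 2; ring
  obtain ⟨s, hs, t, ht, hst⟩ := h hmem
  rw [Prod.mk.injEq] at hst
  refine ⟨1 - s, ⟨by linarith [hs.2], by linarith [hs.1]⟩,
    1 - t, ⟨by linarith [ht.2], by linarith [ht.1]⟩, ?_⟩
  rw [Prod.mk.injEq]
  constructor
  · linarith [hst.1]
  · linarith [hst.2]

theorem stmt1 (h11 h12 h21 h22 : ℝ)
    (hpos11 : 0 < h11) (hpos12 : 0 < h12) (hpos21 : 0 < h21) (hpos22 : 0 < h22)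
    (hdet : h11 * h22 - h12 * h21 < 0) :
    ∀ ξ ∈ Set.Icc (0:ℝ) 1,
      L1max h11 h12 h21 h22 ξ = L1max h11 h12 h21 h22 (1 - ξ) := by
  intro ξ _
  unfold L1max
  congr 1
  ext L
  refine and_congr_right fun _ => ⟨rect_subset_reflect, fun h => ?_⟩
  simpa using rect_subset_reflect h
end
end

section
/- The function ξ ↦ L1max(ξ) on [0,1] attains its maximum uniquely at ξ = 1/2: for every ξ ∈ [0,1] with ξ ≠ 1/2, L1max(ξ) < L1max(1/2). (Remark 2) -/
/-!
In the coordinates `(s, t)` of the parallelogram, with `d = h12 * h21 - h11 * h22 > 0`, the point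
`D(ξ) + (x, 0)` is `(ξ - h22 * x / d, ξ + h21 * x / d)`. Hence a horizontal segment of length `L`
centred at `D(ξ)` lies in the parallelogram iff `L / 2 * max h21 h22 ≤ d * min ξ (1 - ξ)`
(`rect_subset_iff`), so that `L1max ξ = 2 * d * min ξ (1 - ξ) / max h21 h22` (`L1max_eq`).
The tent function `min ξ (1 - ξ)` has its unique maximum at `1 / 2`.
-/

noncomputable section

/-- Membership in the parallelogram of the point `D(ξ) + (x, 0)`, with the denominator `d` of its
coordinates `s = ξ - h22 * x / d` and `t = ξ + h21 * x / d` cleared. -/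
lemma mem_pgram_iff {h11 h12 h21 h22 : ℝ} (hdet : h11 * h22 - h12 * h21 < 0) (ξ x : ℝ) :
    (ξ * (h11 + h12) + x, ξ * (h21 + h22)) ∈ Pgram h11 h12 h21 h22 ↔
      (h22 * x ≤ (h12 * h21 - h11 * h22) * ξ ∧
        -(h22 * x) ≤ (h12 * h21 - h11 * h22) * (1 - ξ)) ∧
      (-(h21 * x) ≤ (h12 * h21 - h11 * h22) * ξ ∧
        h21 * x ≤ (h12 * h21 - h11 * h22) * (1 - ξ)) := by
  obtain ⟨d, hd⟩ : ∃ d, d = h12 * h21 - h11 * h22 := ⟨_, rfl⟩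
  have hdpos : 0 < d := by linarith
  rw [← hd]
  constructor
  · rintro ⟨s, ⟨hs0, hs1⟩, t, ⟨ht0, ht1⟩, hv⟩
    obtain ⟨e1, e2⟩ := Prod.mk.inj hv
    -- Cramer rule for `s` and `t`
    have hs : d * s = d * ξ - h22 * x := by
      rw [hd]; linear_combination h22 * e1 - h12 * e2
    have ht : d * t = d * ξ + h21 * x := by
      rw [hd]; linear_combination h11 * e2 - h21 * e1
    have a1 := mul_nonneg hdpos.le hs0
    have a2 := mul_le_mul_of_nonneg_left hs1 hdpos.le
    have a3 := mul_nonneg hdpos.le ht0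
    have a4 := mul_le_mul_of_nonneg_left ht1 hdpos.le
    refine ⟨⟨?_, ?_⟩, ?_, ?_⟩ <;> linarith
  · rintro ⟨⟨b1, b2⟩, b3, b4⟩
    refine ⟨(d * ξ - h22 * x) / d, ⟨?_, ?_⟩, (d * ξ + h21 * x) / d, ⟨?_, ?_⟩, ?_⟩
    · exact div_nonneg (by linarith) hdpos.le
    · rw [div_le_one hdpos]; linarith
    · exact div_nonneg (by linarith) hdpos.le
    · rw [div_le_one hdpos]; linarith
    · ext
      · field_simp
        rw [hd]; ring
      · field_simp
        ring

lemma rect_subset_iff {h11 h12 h21 h22 ξ L : ℝ} (hpos21 : 0 < h21) (hpos22 : 0 < h22)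
    (hdet : h11 * h22 - h12 * h21 < 0) (hξ : ξ ∈ Set.Icc (0 : ℝ) 1) (hL : 0 ≤ L) :
    Rect L 0 (Dpt h11 h12 h21 h22 ξ) ⊆ Pgram h11 h12 h21 h22 ↔
      L / 2 * max h21 h22 ≤ (h12 * h21 - h11 * h22) * min ξ (1 - ξ) := by
  obtain ⟨hξ0, hξ1⟩ := hξ
  have hd : 0 < h12 * h21 - h11 * h22 := by linarith
  rw [mul_max_of_nonneg _ _ (by linarith : 0 ≤ L / 2), mul_min_of_nonneg _ _ hd.le,
    max_le_iff, le_min_iff, le_min_iff]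
  constructor
  · intro h
    -- the two endpoints of the segment give the four inequalities
    have key : ∀ x : ℝ, |x| ≤ L / 2 →
        (ξ * (h11 + h12) + x, ξ * (h21 + h22)) ∈ Pgram h11 h12 h21 h22 := by
      intro x hx
      apply h
      simpa [Rect, Dpt] using hx
    have e1 := (mem_pgram_iff hdet ξ _).1 (key (L / 2) (abs_of_nonneg (by linarith)).le)
    have e2 := (mem_pgram_iff hdet ξ _).1
      (key (-(L / 2)) (by rw [abs_neg]; exact (abs_of_nonneg (by linarith)).le))
    obtain ⟨⟨p1, p2⟩, p3, p4⟩ := e1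
    obtain ⟨⟨q1, q2⟩, q3, q4⟩ := e2
    refine ⟨⟨?_, ?_⟩, ?_, ?_⟩ <;> linarith
  · rintro ⟨⟨c1, c2⟩, c3, c4⟩ ⟨v1, v2⟩ ⟨hv1, hv2⟩
    simp only [Dpt, zero_div] at hv1 hv2
    have hv2' : v2 = ξ * (h21 + h22) := by
      have := abs_nonpos_iff.1 hv2
      linarith
    obtain ⟨x, rfl⟩ : ∃ x, v1 = ξ * (h11 + h12) + x := ⟨v1 - ξ * (h11 + h12), by ring⟩
    rw [add_sub_cancel_left] at hv1
    obtain ⟨x1, x2⟩ := abs_le.1 hv1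
    rw [hv2', mem_pgram_iff hdet]
    have m1 := mul_le_mul_of_nonneg_left x1 hpos21.le
    have m2 := mul_le_mul_of_nonneg_left x2 hpos21.le
    have m3 := mul_le_mul_of_nonneg_left x1 hpos22.le
    have m4 := mul_le_mul_of_nonneg_left x2 hpos22.le
    refine ⟨⟨?_, ?_⟩, ?_, ?_⟩ <;> linarith

lemma L1max_eq {h11 h12 h21 h22 ξ : ℝ} (hpos21 : 0 < h21) (hpos22 : 0 < h22)
    (hdet : h11 * h22 - h12 * h21 < 0) (hξ : ξ ∈ Set.Icc (0 : ℝ) 1) :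
    L1max h11 h12 h21 h22 ξ =
      2 * (h12 * h21 - h11 * h22) * min ξ (1 - ξ) / max h21 h22 := by
  have hM : 0 < max h21 h22 := lt_max_of_lt_left hpos21
  have hd : 0 < h12 * h21 - h11 * h22 := by linarith
  have hm : 0 ≤ min ξ (1 - ξ) := le_min hξ.1 (by linarith [hξ.2])
  have hset : { L1 | L1 ≥ 0 ∧ Rect L1 0 (Dpt h11 h12 h21 h22 ξ) ⊆ Pgram h11 h12 h21 h22 } =
      Set.Icc 0 (2 * (h12 * h21 - h11 * h22) * min ξ (1 - ξ) / max h21 h22) := by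
    ext L
    refine and_congr_right fun hL => ?_
    rw [rect_subset_iff hpos21 hpos22 hdet hξ hL, le_div_iff₀ hM]
    constructor <;> intro h <;> linarith
  rw [L1max, hset, csSup_Icc (by positivity)]

theorem stmt2 (h11 h12 h21 h22 : ℝ)
    (hpos11 : 0 < h11) (hpos12 : 0 < h12) (hpos21 : 0 < h21) (hpos22 : 0 < h22)
    (hdet : h11 * h22 - h12 * h21 < 0) :
    ∀ ξ ∈ Set.Icc (0:ℝ) 1, ξ ≠ 1 / 2 →
      L1max h11 h12 h21 h22 ξ < L1max h11 h12 h21 h22 (1 / 2) := by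
  intro ξ hξ hne
  rw [L1max_eq hpos21 hpos22 hdet hξ, L1max_eq hpos21 hpos22 hdet ⟨by norm_num, by norm_num⟩]
  have hM : 0 < max h21 h22 := lt_max_of_lt_left hpos21
  have hd : 0 < h12 * h21 - h11 * h22 := by linarith
  have hmin : min ξ (1 - ξ) < min (1 / 2 : ℝ) (1 - 1 / 2) := by
    rcases lt_or_gt_of_ne hne with h | h
    · exact lt_min (min_lt_of_left_lt h) (min_lt_of_left_lt (by linarith))
    · exact lt_min (min_lt_of_right_lt (by linarith)) (min_lt_of_right_lt (by linarith))
  gcongr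
end
end

section
/- For every ξ ∈ [0,1] and every x with 0 ≤ x ≤ L1max(ξ), the set { L2 : L2 ≥ 0 ∧ Rect(x, L2, D(ξ)) ⊆ P } has a greatest element L2(ξ, x), and L2(ξ, x) = 2 · min(L2up(ξ, x), L2down(ξ, x)). (Proposition 2, main identity: the maximal symmetric vertical extension is twice the minimum of the maximal one-sided upward and downward extensions.) -/
/-!
The parallelogram `P` is a linear image of a compact square, hence compact. The set of admissible
lengths in each of three extremal problems (horizontal segment, upward and downward rectangle)
is therefore closed and bounded: among the nonnegative `L`, it is an intersection
of preimages of `P` under continuous maps of `L` (truncations of the displacement from `D(ξ)` to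
size `L`), see `isGreatest_sSup_of_family`. So all three suprema are attained.

Attainment of `L1max` shows that the horizontal segment of length `x` lies in `P`, so `0` is an
admissible height. The one-sided sets then have greatest elements `u` and `d`, and since
`Rect x L` is the union of `RectUp x (L / 2)` and `RectDown x (L / 2)`, the greatest admissible
`L` for the symmetric rectangle is `2 * min u d`.
-/

noncomputable section

lemma isCompact_Pgram (h11 h12 h21 h22 : ℝ) : IsCompact (Pgram h11 h12 h21 h22) := by
  have h : Pgram h11 h12 h21 h22 =
      (fun p : ℝ × ℝ => (h11 * p.1 + h12 * p.2, h21 * p.1 + h22 * p.2)) ''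
        (Set.Icc (0:ℝ) 1 ×ˢ Set.Icc (0:ℝ) 1) := by
    ext v
    constructor
    · rintro ⟨s, hs, t, ht, rfl⟩
      exact ⟨(s, t), ⟨hs, ht⟩, rfl⟩
    · rintro ⟨⟨s, t⟩, ⟨hs, ht⟩, rfl⟩
      exact ⟨s, hs, t, ht, rfl⟩
  rw [h]
  exact (isCompact_Icc.prod isCompact_Icc).image (by fun_prop)

lemma Dpt_mem_Pgram (h11 h12 h21 h22 : ℝ) {ξ : ℝ} (hξ : ξ ∈ Set.Icc (0:ℝ) 1) :
    Dpt h11 h12 h21 h22 ξ ∈ Pgram h11 h12 h21 h22 :=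
  ⟨ξ, hξ, ξ, hξ, by simp only [Dpt, Prod.mk.injEq]; constructor <;> ring⟩

/-- A nonempty bounded set of nonnegative lengths cut out by continuous conditions with values in
a closed set attains its supremum. -/
lemma isGreatest_sSup_of_family {ι : Type*} {P : Set (ℝ × ℝ)} (hP : IsClosed P)
    (f : ι → ℝ → ℝ × ℝ) (hf : ∀ i, Continuous (f i)) {T : Set ℝ}
    (hT : ∀ L, L ∈ T ↔ 0 ≤ L ∧ ∀ i, f i L ∈ P) (h0 : (0:ℝ) ∈ T) (hb : BddAbove T) :
    IsGreatest T (sSup T) := by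
  have hTeq : T = Set.Ici 0 ∩ ⋂ i, f i ⁻¹' P := by
    ext L
    simp [hT]
  have hc : IsClosed T := by
    rw [hTeq]
    exact isClosed_Ici.inter (isClosed_iInter fun i => hP.preimage (hf i))
  exact ⟨hc.csSup_mem ⟨0, h0⟩ hb, fun L hL => le_csSup hb hL⟩

lemma exists_coord_bound {P : Set (ℝ × ℝ)} (hP : IsCompact P) :
    ∃ M : ℝ, ∀ v ∈ P, |v.1| ≤ M ∧ |v.2| ≤ M := by
  obtain ⟨M, hM⟩ := hP.isBounded.exists_norm_le
  exact ⟨M, fun v hv => ⟨(norm_fst_le v).trans (hM v hv), (norm_snd_le v).trans (hM v hv)⟩⟩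

lemma isGreatest_horizontal {P : Set (ℝ × ℝ)} (hP : IsCompact P) {c : ℝ × ℝ} (hc : c ∈ P) :
    IsGreatest {L | L ≥ 0 ∧ Rect L 0 c ⊆ P} (sSup {L | L ≥ 0 ∧ Rect L 0 c ⊆ P}) := by
  obtain ⟨M, hM⟩ := exists_coord_bound hP
  -- Clamping the horizontal displacement `w` to `[-L/2, L/2]` sweeps out the segment.
  refine isGreatest_sSup_of_family hP.isClosed
    (fun (w : ℝ) L => (c.1 + max (-(L / 2)) (min w (L / 2)), c.2))
    (fun w => by fun_prop) (fun L => ?_) ?_ ?_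
  · refine and_congr_right fun hL => ⟨fun h w => h ⟨?_, by simp⟩, fun h v hv => ?_⟩
    · have hL' : 0 ≤ L := hL
      simp only [add_sub_cancel_left]
      exact abs_le.2 ⟨le_max_left _ _, max_le (by linarith) (min_le_right _ _)⟩
    · obtain ⟨h1, h2⟩ := hv
      have h2' : v.2 = c.2 := by
        rw [zero_div] at h2
        exact sub_eq_zero.1 (abs_nonpos_iff.1 h2)
      have h1' := abs_le.1 h1
      have := h (v.1 - c.1)
      rw [min_eq_left h1'.2, max_eq_right h1'.1, add_sub_cancel, ← h2'] at this
      exact this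
  · refine ⟨le_refl _, fun v hv => ?_⟩
    obtain ⟨h1, h2⟩ := hv
    rw [zero_div] at h1 h2
    have : v = c := Prod.ext (sub_eq_zero.1 (abs_nonpos_iff.1 h1))
      (sub_eq_zero.1 (abs_nonpos_iff.1 h2))
    rwa [this]
  · refine ⟨2 * (M - c.1), fun L hL => ?_⟩
    have hL0 : 0 ≤ L := hL.1
    have hmem : ((c.1 + L / 2, c.2) : ℝ × ℝ) ∈ P :=
      hL.2 ⟨by simp [abs_of_nonneg (div_nonneg hL0 zero_le_two)], by simp⟩
    have := (abs_le.1 (hM _ hmem).1).2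
    simp only at this
    linarith

lemma isGreatest_up {P : Set (ℝ × ℝ)} (hP : IsCompact P) {c : ℝ × ℝ} {x : ℝ} (hx : 0 ≤ x)
    (hseg : Rect x 0 c ⊆ P) :
    IsGreatest {L | L ≥ 0 ∧ RectUp x L c ⊆ P} (sSup {L | L ≥ 0 ∧ RectUp x L c ⊆ P}) := by
  obtain ⟨M, hM⟩ := exists_coord_bound hP
  -- Truncating the vertical displacement at `L` sweeps out the one-sided rectangle.
  refine isGreatest_sSup_of_family hP.isClosed
    (fun (p : {p : ℝ × ℝ // |p.1 - c.1| ≤ x / 2 ∧ 0 ≤ p.2}) L => (p.1.1, c.2 + min p.1.2 L))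
    (fun w => by fun_prop) (fun L => ?_) ?_ ?_
  · refine and_congr_right fun hL => ⟨fun h p => h ⟨p.2.1, ?_, ?_⟩, fun h v hv => ?_⟩
    · exact le_add_of_nonneg_right (le_min p.2.2 hL)
    · exact add_le_add_right (min_le_right _ _) _
    · obtain ⟨h1, h2, h3⟩ := hv
      have := h ⟨(v.1, v.2 - c.2), h1, sub_nonneg.2 h2⟩
      simp only at this
      rwa [min_eq_left (by linarith), add_sub_cancel] at this
  · refine ⟨le_refl _, fun v hv => hseg ⟨hv.1, ?_⟩⟩
    have : v.2 = c.2 := le_antisymm (by simpa using hv.2.2) hv.2.1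
    simp [this]
  · refine ⟨M - c.2, fun L hL => ?_⟩
    have hL0 : 0 ≤ L := hL.1
    have hmem : ((c.1, c.2 + L) : ℝ × ℝ) ∈ P :=
      hL.2 ⟨by simpa using div_nonneg hx zero_le_two, by simpa using hL0, le_refl _⟩
    have := (abs_le.1 (hM _ hmem).2).2
    simp only at this
    linarith

lemma isGreatest_down {P : Set (ℝ × ℝ)} (hP : IsCompact P) {c : ℝ × ℝ} {x : ℝ} (hx : 0 ≤ x)
    (hseg : Rect x 0 c ⊆ P) :
    IsGreatest {L | L ≥ 0 ∧ RectDown x L c ⊆ P} (sSup {L | L ≥ 0 ∧ RectDown x L c ⊆ P}) := by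
  obtain ⟨M, hM⟩ := exists_coord_bound hP
  -- Truncating the vertical displacement at `L` sweeps out the one-sided rectangle.
  refine isGreatest_sSup_of_family hP.isClosed
    (fun (p : {p : ℝ × ℝ // |p.1 - c.1| ≤ x / 2 ∧ 0 ≤ p.2}) L => (p.1.1, c.2 - min p.1.2 L))
    (fun w => by fun_prop) (fun L => ?_) ?_ ?_
  · refine and_congr_right fun hL => ⟨fun h p => h ⟨p.2.1, ?_, ?_⟩, fun h v hv => ?_⟩
    · exact sub_le_sub_left (min_le_right _ _) _
    · exact sub_le_self _ (le_min p.2.2 hL)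
    · obtain ⟨h1, h2, h3⟩ := hv
      have := h ⟨(v.1, c.2 - v.2), h1, sub_nonneg.2 h3⟩
      simp only at this
      rwa [min_eq_left (by linarith), sub_sub_cancel] at this
  · refine ⟨le_refl _, fun v hv => hseg ⟨hv.1, ?_⟩⟩
    have : v.2 = c.2 := le_antisymm hv.2.2 (by simpa using hv.2.1)
    simp [this]
  · refine ⟨M + c.2, fun L hL => ?_⟩
    have hL0 : 0 ≤ L := hL.1
    have hmem : ((c.1, c.2 - L) : ℝ × ℝ) ∈ P :=
      hL.2 ⟨by simpa using div_nonneg hx zero_le_two, le_refl _, by simpa using hL0⟩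
    have := (abs_le.1 (hM _ hmem).2).1
    simp only at this
    linarith

lemma Rect_eq_union {x L : ℝ} (hL : 0 ≤ L) (c : ℝ × ℝ) :
    Rect x L c = RectUp x (L / 2) c ∪ RectDown x (L / 2) c := by
  ext v
  simp only [Rect, RectUp, RectDown, Set.mem_union, Set.mem_ofPred_eq, ← and_or_left]
  refine and_congr_right fun _ => ?_
  rw [abs_le]
  constructor
  · rintro ⟨h1, h2⟩
    rcases le_total c.2 v.2 with h | h
    · exact Or.inl ⟨h, by linarith⟩
    · exact Or.inr ⟨by linarith, h⟩
  · rintro (⟨h1, h2⟩ | ⟨h1, h2⟩) <;> constructor <;> linarith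

theorem stmt3 (h11 h12 h21 h22 : ℝ)
    (hpos11 : 0 < h11) (hpos12 : 0 < h12) (hpos21 : 0 < h21) (hpos22 : 0 < h22)
    (hdet : h11 * h22 - h12 * h21 < 0) :
    ∀ ξ ∈ Set.Icc (0:ℝ) 1, ∀ x, 0 ≤ x → x ≤ L1max h11 h12 h21 h22 ξ →
      IsGreatest
        { L2 | L2 ≥ 0 ∧ Rect x L2 (Dpt h11 h12 h21 h22 ξ) ⊆ Pgram h11 h12 h21 h22 }
        (L2fun h11 h12 h21 h22 ξ x) ∧
      L2fun h11 h12 h21 h22 ξ x =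
        2 * min (L2up h11 h12 h21 h22 ξ x) (L2down h11 h12 h21 h22 ξ x) := by
  intro ξ hξ x hx hxmax
  have hP := isCompact_Pgram h11 h12 h21 h22
  have hseg : Rect x 0 (Dpt h11 h12 h21 h22 ξ) ⊆ Pgram h11 h12 h21 h22 := fun v hv =>
    (isGreatest_horizontal hP (Dpt_mem_Pgram h11 h12 h21 h22 hξ)).1.2
      ⟨hv.1.trans (div_le_div_of_nonneg_right hxmax zero_le_two), hv.2⟩
  have hU : IsGreatest _ (L2up h11 h12 h21 h22 ξ x) := isGreatest_up hP hx hseg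
  have hD : IsGreatest _ (L2down h11 h12 h21 h22 ξ x) := isGreatest_down hP hx hseg
  have hS : IsGreatest
      { L2 | L2 ≥ 0 ∧ Rect x L2 (Dpt h11 h12 h21 h22 ξ) ⊆ Pgram h11 h12 h21 h22 }
      (2 * min (L2up h11 h12 h21 h22 ξ x) (L2down h11 h12 h21 h22 ξ x)) := by
    have h0 : 0 ≤ 2 * min (L2up h11 h12 h21 h22 ξ x) (L2down h11 h12 h21 h22 ξ x) :=
      mul_nonneg zero_le_two (le_min hU.1.1 hD.1.1)
    refine ⟨⟨h0, ?_⟩, fun L hL => ?_⟩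
    · rw [Rect_eq_union h0, mul_div_cancel_left₀ _ two_ne_zero]
      refine Set.union_subset (fun v hv => hU.1.2 ⟨hv.1, hv.2.1, hv.2.2.trans ?_⟩)
        (fun v hv => hD.1.2 ⟨hv.1, le_trans ?_ hv.2.1, hv.2.2⟩)
      · exact add_le_add_right (min_le_left _ _) _
      · exact sub_le_sub_left (min_le_right _ _) _
    · obtain ⟨hL0, hLP⟩ := hL
      rw [Rect_eq_union hL0] at hLP
      have hL2 : L / 2 ≥ 0 := div_nonneg hL0 zero_le_two
      have h1 := hU.2 ⟨hL2, Set.subset_union_left.trans hLP⟩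
      have h2 := hD.2 ⟨hL2, Set.subset_union_right.trans hLP⟩
      have := le_min h1 h2
      linarith
  have heq : L2fun h11 h12 h21 h22 ξ x = _ := hS.csSup_eq
  exact ⟨heq ▸ hS, heq⟩
end
end

section
/- Suppose 0 ≤ ξ ≤ h11/(h11 + h12). Then for every x with 0 ≤ x ≤ L1max(ξ), the set { L2 : L2 ≥ 0 ∧ RectUp(x, L2, D(ξ)) ⊆ P } has a greatest element equal to (−ξ·(h11·h22 − h12·h21) − (x/2)·h21) / h11. (Proposition 2, formula for L2up, Case I) -/
/-!
Write `d = h12·h21 − h11·h22 > 0`. Inverting the linear map, a point `(a, b)` lies in the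
parallelogram iff `0 ≤ h12·b − h22·a ≤ d` and `0 ≤ h21·a − h11·b ≤ d` (`mem_Pgram_iff`), these two
forms being `d·s` and `d·t`; both take the value `ξ·d` at `D(ξ)`. Among the four inequalities for
the upward rectangle, `t ≥ 0` at the top left corner reads
`h11·L2 + h21·x/2 ≤ ξ·d`, which is the claimed upper bound for `L2`. The remaining ones
hold for that `L2`: those on `s ≥ 0`, `t ≤ 1` and the nonnegativity of `L2` follow from
`x ≤ L1max ξ` (`L1max_mul_le`), and `s ≤ 1` at the top left corner reduces to
`ξ·(h11 + h12) ≤ h11 + x/2`.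
-/

noncomputable section

/-- Half-plane description of the parallelogram, from solving for `s` and `t` explicitly. -/
lemma mem_Pgram_iff {h11 h12 h21 h22 : ℝ} (hdet : h11 * h22 - h12 * h21 < 0) (a b : ℝ) :
    (a, b) ∈ Pgram h11 h12 h21 h22 ↔
      (0 ≤ h12 * b - h22 * a ∧ h12 * b - h22 * a ≤ h12 * h21 - h11 * h22) ∧
      (0 ≤ h21 * a - h11 * b ∧ h21 * a - h11 * b ≤ h12 * h21 - h11 * h22) := by
  have hd : 0 < h12 * h21 - h11 * h22 := by linarith
  constructor
  · rintro ⟨s, ⟨hs0, hs1⟩, t, ⟨ht0, ht1⟩, h⟩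
    obtain ⟨rfl, rfl⟩ := Prod.mk.inj h
    have e1 : h12 * (h21 * s + h22 * t) - h22 * (h11 * s + h12 * t)
        = (h12 * h21 - h11 * h22) * s := by ring
    have e2 : h21 * (h11 * s + h12 * t) - h11 * (h21 * s + h22 * t)
        = (h12 * h21 - h11 * h22) * t := by ring
    rw [e1, e2]
    exact ⟨⟨mul_nonneg hd.le hs0, mul_le_of_le_one_right hd.le hs1⟩,
      ⟨mul_nonneg hd.le ht0, mul_le_of_le_one_right hd.le ht1⟩⟩
  · rintro ⟨⟨hs0, hs1⟩, ⟨ht0, ht1⟩⟩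
    refine ⟨(h12 * b - h22 * a) / (h12 * h21 - h11 * h22),
      ⟨div_nonneg hs0 hd.le, (div_le_one hd).2 hs1⟩,
      (h21 * a - h11 * b) / (h12 * h21 - h11 * h22),
      ⟨div_nonneg ht0 hd.le, (div_le_one hd).2 ht1⟩, ?_⟩
    have hd' := hd.ne'
    ext
    · simp only
      rw [mul_div_assoc', mul_div_assoc', ← add_div, eq_div_iff hd']
      ring
    · simp only
      rw [mul_div_assoc', mul_div_assoc', ← add_div, eq_div_iff hd']
      ring

/-- A linear bound valid for every admissible horizontal length passes to `L1max`. The bound `c`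
must be nonnegative only because the supremum of an empty set of reals is `0`. -/
lemma L1max_mul_le {h11 h12 h21 h22 ξ k c : ℝ} (hk : 0 < k) (hc : 0 ≤ c)
    (h : ∀ L, 0 ≤ L → Rect L 0 (Dpt h11 h12 h21 h22 ξ) ⊆ Pgram h11 h12 h21 h22 →
      k * (L / 2) ≤ c) :
    k * (L1max h11 h12 h21 h22 ξ / 2) ≤ c := by
  have : L1max h11 h12 h21 h22 ξ ≤ 2 * c / k := by
    refine Real.sSup_le ?_ (by positivity)
    rintro L ⟨hL, hsub⟩
    rw [le_div_iff₀ hk]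
    linarith [h L hL hsub]
  rw [le_div_iff₀ hk] at this
  linarith

theorem stmt4 (h11 h12 h21 h22 : ℝ)
    (hpos11 : 0 < h11) (hpos12 : 0 < h12) (hpos21 : 0 < h21) (hpos22 : 0 < h22)
    (hdet : h11 * h22 - h12 * h21 < 0)
    (ξ : ℝ) (hξ0 : 0 ≤ ξ) (hξ1 : ξ ≤ h11 / (h11 + h12)) :
    ∀ x, 0 ≤ x → x ≤ L1max h11 h12 h21 h22 ξ →
      IsGreatest
        { L2 | L2 ≥ 0 ∧ RectUp x L2 (Dpt h11 h12 h21 h22 ξ) ⊆ Pgram h11 h12 h21 h22 }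
        ((-ξ * (h11 * h22 - h12 * h21) - (x / 2) * h21) / h11) := by
  intro x hx0 hx
  have hd : 0 < h12 * h21 - h11 * h22 := by linarith
  have hξ : ξ * (h11 + h12) ≤ h11 := (le_div_iff₀ (by positivity)).1 hξ1
  have hξle : ξ ≤ 1 := hξ1.trans ((div_le_one (by positivity)).2 (by linarith))
  have hξd : 0 ≤ ξ * (h12 * h21 - h11 * h22) := mul_nonneg hξ0 hd.le
  have hξd' : 0 ≤ (1 - ξ) * (h12 * h21 - h11 * h22) := mul_nonneg (by linarith) hd.le
  -- The two endpoints of an admissible horizontal segment lie in the parallelogram.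
  have hright : ∀ L, 0 ≤ L → Rect L 0 (Dpt h11 h12 h21 h22 ξ) ⊆ Pgram h11 h12 h21 h22 →
      (ξ * (h11 + h12) + L / 2, ξ * (h21 + h22)) ∈ Pgram h11 h12 h21 h22 := by
    intro L hL hsub
    refine hsub ⟨?_, ?_⟩
    · simp only [Dpt, add_sub_cancel_left]
      rw [abs_of_nonneg (by positivity)]
    · simp [Dpt]
  have hleft : ∀ L, 0 ≤ L → Rect L 0 (Dpt h11 h12 h21 h22 ξ) ⊆ Pgram h11 h12 h21 h22 →
      (ξ * (h11 + h12) - L / 2, ξ * (h21 + h22)) ∈ Pgram h11 h12 h21 h22 := by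
    intro L hL hsub
    refine hsub ⟨?_, ?_⟩
    · simp only [Dpt, sub_sub_cancel_left, abs_neg]
      rw [abs_of_nonneg (by positivity)]
    · simp [Dpt]
  have b1 : h22 * (x / 2) ≤ ξ * (h12 * h21 - h11 * h22) := by
    have h := L1max_mul_le hpos22 hξd fun L hL hsub => by
      linarith [((mem_Pgram_iff hdet _ _).1 (hright L hL hsub)).1.1]
    exact (mul_le_mul_of_nonneg_left (by linarith) hpos22.le).trans h
  have b2 : h21 * (x / 2) ≤ ξ * (h12 * h21 - h11 * h22) := by
    have h := L1max_mul_le hpos21 hξd fun L hL hsub => by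
      linarith [((mem_Pgram_iff hdet _ _).1 (hleft L hL hsub)).2.1]
    exact (mul_le_mul_of_nonneg_left (by linarith) hpos21.le).trans h
  have b3 : h21 * (x / 2) ≤ (1 - ξ) * (h12 * h21 - h11 * h22) := by
    have h := L1max_mul_le hpos21 hξd' fun L hL hsub => by
      linarith [((mem_Pgram_iff hdet _ _).1 (hright L hL hsub)).2.2]
    exact (mul_le_mul_of_nonneg_left (by linarith) hpos21.le).trans h
  constructor
  · refine ⟨div_nonneg (by linarith) hpos11.le, ?_⟩
    rintro ⟨a, b⟩ ⟨hab, hb0, hb1⟩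
    simp only [Dpt] at hab hb0 hb1
    obtain ⟨ha0, ha1⟩ := abs_le.1 hab
    rw [← sub_le_iff_le_add', le_div_iff₀ hpos11] at hb1
    have p1 := mul_le_mul_of_nonneg_left ha0 hpos22.le
    have p2 := mul_le_mul_of_nonneg_left ha1 hpos22.le
    have p3 := mul_le_mul_of_nonneg_left ha0 hpos21.le
    have p4 := mul_le_mul_of_nonneg_left ha1 hpos21.le
    have p5 := mul_le_mul_of_nonneg_left hb0 hpos12.le
    have p6 := mul_le_mul_of_nonneg_left hb0 hpos11.le
    refine (mem_Pgram_iff hdet a b).2 ⟨⟨by linarith, ?_⟩, ⟨by linarith, by linarith⟩⟩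
    -- The height is only known through `h11 * L2`, so `s ≤ 1` is checked after scaling by `h11`.
    refine le_of_mul_le_mul_left ?_ hpos11
    have q1 := mul_le_mul_of_nonneg_left hb1 hpos12.le
    have q2 := mul_le_mul_of_nonneg_left p1 hpos11.le
    have q3 : 0 ≤ (h11 - ξ * (h11 + h12) + x / 2) * (h12 * h21 - h11 * h22) :=
      mul_nonneg (by linarith) hd.le
    linarith
  · rintro L ⟨hL, hsub⟩
    have hmem : (ξ * (h11 + h12) - x / 2, ξ * (h21 + h22) + L) ∈ Pgram h11 h12 h21 h22 := by
      refine hsub ⟨?_, ?_, ?_⟩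
      · simp only [Dpt, sub_sub_cancel_left, abs_neg]
        rw [abs_of_nonneg (by positivity)]
      · simpa [Dpt] using hL
      · simp [Dpt]
    rw [le_div_iff₀ hpos11]
    linarith [((mem_Pgram_iff hdet _ _).1 hmem).2.1]
end
end

section
/- Suppose h11/(h11 + h12) ≤ ξ ≤ 1, and set η3(ξ) := 2·ξ·h12 − 2·(1 − ξ)·h11. Then for every x with 0 ≤ x ≤ L1max(ξ), the set { L2 : L2 ≥ 0 ∧ RectUp(x, L2, D(ξ)) ⊆ P } has a greatest element, equal to (−(1 − ξ)·(h11·h22 − h12·h21) − (x/2)·h22) / h12 when 0 ≤ x ≤ η3(ξ), and equal to (−ξ·(h11·h22 − h12·h21) − (x/2)·h21) / h11 when η3(ξ) ≤ x ≤ L1max(ξ). (Proposition 2, formula for L2up, Case II) -/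
/-!
Put `d = h12 * h21 - h11 * h22 > 0`. Inverting the matrix `h` (Cramer's rule) describes the
parallelogram by `0 ≤ h12 * b - h22 * a ≤ d` and `0 ≤ h21 * a - h11 * b ≤ d`. Each of these four
affine forms is monotone in each coordinate, so on a rectangle it is extremal at a corner, and
`RectUp x L (D ξ) ⊆ P` amounts to four linear inequalities in `x` and `L`
(`rectUp_subset_iff`). Two of them do not involve `L`; they, and the fact that the other two hold
at `L = 0`, follow from `x ≤ L1max ξ` (`bounds_of_le_L1max`). The remaining two are
`L ≤ ((1 - ξ) * d - x / 2 * h22) / h12` and `L ≤ (ξ * d - x / 2 * h21) / h11`, so the greatest `L`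
is the smaller of these two right-hand sides. Cross-multiplying and dividing by `d` shows that the
first one is the smaller exactly when `x ≤ 2 * ξ * h12 - 2 * (1 - ξ) * h11`.
-/

noncomputable section

/-- Only the lower right and the upper left corner matter: each of the four inequalities cutting
out the parallelogram is tightest at one of them. -/
lemma rectUp_subset_iff {h11 h12 h21 h22 : ℝ}
    (hpos11 : 0 < h11) (hpos12 : 0 < h12) (hpos21 : 0 < h21) (hpos22 : 0 < h22)
    (hdet : h11 * h22 - h12 * h21 < 0) (ξ : ℝ) {x L : ℝ} (hx : 0 ≤ x) (hL : 0 ≤ L) :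
    RectUp x L (Dpt h11 h12 h21 h22 ξ) ⊆ Pgram h11 h12 h21 h22 ↔
      (h22 * (x / 2) ≤ ξ * (h12 * h21 - h11 * h22) ∧
        h21 * (x / 2) ≤ (1 - ξ) * (h12 * h21 - h11 * h22)) ∧
      (h12 * L + h22 * (x / 2) ≤ (1 - ξ) * (h12 * h21 - h11 * h22) ∧
        h11 * L + h21 * (x / 2) ≤ ξ * (h12 * h21 - h11 * h22)) := by
  constructor
  · intro h
    have hx2 : |x / 2| ≤ x / 2 := (abs_of_nonneg (by linarith)).le
    have lowerRight : (ξ * (h11 + h12) + x / 2, ξ * (h21 + h22)) ∈ Pgram h11 h12 h21 h22 :=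
      h ⟨by simpa [Dpt] using hx2, by simp [Dpt], by simpa [Dpt] using hL⟩
    have upperLeft : (ξ * (h11 + h12) - x / 2, ξ * (h21 + h22) + L) ∈ Pgram h11 h12 h21 h22 :=
      h ⟨by simpa [Dpt] using hx2, by simpa [Dpt] using hL, by simp [Dpt]⟩
    rw [mem_Pgram_iff hdet] at lowerRight upperLeft
    obtain ⟨⟨p1, p2⟩, p3, p4⟩ := lowerRight
    obtain ⟨⟨q1, q2⟩, q3, q4⟩ := upperLeft
    refine ⟨⟨?_, ?_⟩, ?_, ?_⟩ <;> linarith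
  · rintro ⟨⟨h1, h2⟩, h3, h4⟩ ⟨a, b⟩ ⟨ha, hb1, hb2⟩
    simp only [Dpt] at ha hb1 hb2
    rw [abs_le] at ha
    obtain ⟨ha1, ha2⟩ := ha
    rw [mem_Pgram_iff hdet]
    have a1 := mul_le_mul_of_nonneg_left ha1 hpos22.le
    have a2 := mul_le_mul_of_nonneg_left ha2 hpos22.le
    have a3 := mul_le_mul_of_nonneg_left ha1 hpos21.le
    have a4 := mul_le_mul_of_nonneg_left ha2 hpos21.le
    have b1 := mul_le_mul_of_nonneg_left hb1 hpos12.le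
    have b2 := mul_le_mul_of_nonneg_left hb2 hpos12.le
    have b3 := mul_le_mul_of_nonneg_left hb1 hpos11.le
    have b4 := mul_le_mul_of_nonneg_left hb2 hpos11.le
    refine ⟨⟨?_, ?_⟩, ?_, ?_⟩ <;> linarith

/-- The inequalities of `rectUp_subset_iff` at `L = 0` persist up to the supremum `L1max ξ`,
since they are closed conditions on `x`. -/
lemma bounds_of_le_L1max {h11 h12 h21 h22 : ℝ}
    (hpos11 : 0 < h11) (hpos12 : 0 < h12) (hpos21 : 0 < h21) (hpos22 : 0 < h22)
    (hdet : h11 * h22 - h12 * h21 < 0) {ξ x : ℝ} (hξ0 : 0 ≤ ξ) (hξ1 : ξ ≤ 1)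
    (hx : x ≤ L1max h11 h12 h21 h22 ξ) :
    (h22 * (x / 2) ≤ ξ * (h12 * h21 - h11 * h22) ∧
      h21 * (x / 2) ≤ (1 - ξ) * (h12 * h21 - h11 * h22)) ∧
    (h22 * (x / 2) ≤ (1 - ξ) * (h12 * h21 - h11 * h22) ∧
      h21 * (x / 2) ≤ ξ * (h12 * h21 - h11 * h22)) := by
  have hd : 0 < h12 * h21 - h11 * h22 := by linarith
  have hRect : ∀ y, Rect y 0 (Dpt h11 h12 h21 h22 ξ) = RectUp y 0 (Dpt h11 h12 h21 h22 ξ) := by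
    intro y
    ext v
    simp only [Rect, RectUp, Set.mem_ofPred_eq, abs_le]
    constructor <;> rintro ⟨h, h1, h2⟩ <;> refine ⟨h, ?_, ?_⟩ <;> linarith
  have hiff : ∀ y, 0 ≤ y → (Rect y 0 (Dpt h11 h12 h21 h22 ξ) ⊆ Pgram h11 h12 h21 h22 ↔ _) :=
    fun y hy => (hRect y).symm ▸
      rectUp_subset_iff hpos11 hpos12 hpos21 hpos22 hdet ξ hy le_rfl
  have hξd := mul_nonneg hξ0 hd.le
  have hξd' := mul_nonneg (sub_nonneg.2 hξ1) hd.le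
  -- nonemptiness matters: the supremum of the empty set would be the junk value `0`
  have hne : { L1 | L1 ≥ 0 ∧
      Rect L1 0 (Dpt h11 h12 h21 h22 ξ) ⊆ Pgram h11 h12 h21 h22 }.Nonempty := by
    refine ⟨0, le_rfl, (hiff 0 le_rfl).2 ⟨⟨?_, ?_⟩, ?_, ?_⟩⟩ <;> linarith
  have key : ∀ k r : ℝ, 0 < k →
      (∀ y, 0 ≤ y → Rect y 0 (Dpt h11 h12 h21 h22 ξ) ⊆ Pgram h11 h12 h21 h22 →
        k * (y / 2) ≤ r) → k * (x / 2) ≤ r := by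
    intro k r hk hy
    have hsup : L1max h11 h12 h21 h22 ξ ≤ 2 * r / k := by
      refine csSup_le hne ?_
      rintro y ⟨hy0, hyP⟩
      rw [le_div_iff₀ hk]
      linarith [hy y hy0 hyP]
    have hx' := hx.trans hsup
    rw [le_div_iff₀ hk] at hx'
    linarith
  refine ⟨⟨key _ _ hpos22 ?_, key _ _ hpos21 ?_⟩, key _ _ hpos22 ?_, key _ _ hpos21 ?_⟩ <;>
  · intro y hy0 hyP
    obtain ⟨⟨h1, h2⟩, h3, h4⟩ := (hiff y hy0).1 hyP
    linarith

theorem stmt5 (h11 h12 h21 h22 : ℝ)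
    (hpos11 : 0 < h11) (hpos12 : 0 < h12) (hpos21 : 0 < h21) (hpos22 : 0 < h22)
    (hdet : h11 * h22 - h12 * h21 < 0)
    (ξ : ℝ) (hξ0 : h11 / (h11 + h12) ≤ ξ) (hξ1 : ξ ≤ 1) :
    ∀ x, 0 ≤ x → x ≤ L1max h11 h12 h21 h22 ξ →
      (x ≤ 2 * ξ * h12 - 2 * (1 - ξ) * h11 →
        IsGreatest
          { L2 | L2 ≥ 0 ∧ RectUp x L2 (Dpt h11 h12 h21 h22 ξ) ⊆ Pgram h11 h12 h21 h22 }
          ((-(1 - ξ) * (h11 * h22 - h12 * h21) - (x / 2) * h22) / h12)) ∧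
      (2 * ξ * h12 - 2 * (1 - ξ) * h11 ≤ x →
        IsGreatest
          { L2 | L2 ≥ 0 ∧ RectUp x L2 (Dpt h11 h12 h21 h22 ξ) ⊆ Pgram h11 h12 h21 h22 }
          ((-ξ * (h11 * h22 - h12 * h21) - (x / 2) * h21) / h11)) := by
  intro x hx0 hx
  have hd : 0 < h12 * h21 - h11 * h22 := by linarith
  have hξ : 0 ≤ ξ := le_trans (by positivity) hξ0
  obtain ⟨⟨c1, c2⟩, c3, c4⟩ :=
    bounds_of_le_L1max hpos11 hpos12 hpos21 hpos22 hdet hξ hξ1 hx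
  have hiff : ∀ L, 0 ≤ L → (RectUp x L (Dpt h11 h12 h21 h22 ξ) ⊆ Pgram h11 h12 h21 h22 ↔ _) :=
    fun L hL => rectUp_subset_iff hpos11 hpos12 hpos21 hpos22 hdet ξ hx0 hL
  constructor
  · intro hη
    set A := (-(1 - ξ) * (h11 * h22 - h12 * h21) - (x / 2) * h22) / h12 with hA
    have hA' : h12 * A = -(1 - ξ) * (h11 * h22 - h12 * h21) - (x / 2) * h22 :=
      mul_div_cancel₀ _ hpos12.ne'
    have hA0 : 0 ≤ A := div_nonneg (by linarith) hpos12.le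
    constructor
    · refine ⟨hA0, (hiff A hA0).2 ⟨⟨c1, c2⟩, by linarith, ?_⟩⟩
      -- after multiplication by `h12` the claim is `d` times the condition on `x`
      refine le_of_mul_le_mul_left ?_ hpos12
      have e : h12 * (h11 * A + h21 * (x / 2)) = h11 * (h12 * A) + h12 * h21 * (x / 2) := by ring
      rw [e, hA']
      linarith [mul_le_mul_of_nonneg_left hη hd.le]
    · rintro L ⟨hL, hP⟩
      rw [hA, le_div_iff₀ hpos12]
      linarith [((hiff L hL).1 hP).2.1]
  · intro hη
    set B := (-ξ * (h11 * h22 - h12 * h21) - (x / 2) * h21) / h11 with hB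
    have hB' : h11 * B = -ξ * (h11 * h22 - h12 * h21) - (x / 2) * h21 :=
      mul_div_cancel₀ _ hpos11.ne'
    have hB0 : 0 ≤ B := div_nonneg (by linarith) hpos11.le
    constructor
    · refine ⟨hB0, (hiff B hB0).2 ⟨⟨c1, c2⟩, ?_, by linarith⟩⟩
      refine le_of_mul_le_mul_left ?_ hpos11
      have e : h11 * (h12 * B + h22 * (x / 2)) = h12 * (h11 * B) + h11 * h22 * (x / 2) := by ring
      rw [e, hB']
      linarith [mul_le_mul_of_nonneg_left hη hd.le]
    · rintro L ⟨hL, hP⟩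
      rw [hB, le_div_iff₀ hpos11]
      linarith [((hiff L hL).1 hP).2.2]
end
end

section
/- Suppose h12/(h11 + h12) ≤ ξ ≤ 1. Then for every x with 0 ≤ x ≤ L1max(ξ), the set { L2 : L2 ≥ 0 ∧ RectDown(x, L2, D(ξ)) ⊆ P } has a greatest element equal to (−(1 − ξ)·(h11·h22 − h12·h21) − (x/2)·h21) / h11. (Proposition 2, formula for L2down, Case II) -/
/-!
Write `d = h12 * h21 - h11 * h22 > 0`. Inverting the linear map, membership in the parallelogram
amounts to the four linear inequalities of `mem_Pgram_iff`. At a point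
`D(ξ) + (p, -q)` with `|p| ≤ x / 2` and `0 ≤ q ≤ L2`, they read

* `t ≤ 1`: `h21 * p + h11 * q ≤ (1 - ξ) * d`, binding at the corner `p = x / 2`, `q = L2`; this is
  the constraint that yields the claimed value of `L2`;
* `0 ≤ s`: `h22 * p + h12 * q ≤ ξ * d`, implied by the previous one at the corner
  because `h12 ≤ ξ * (h11 + h12)`;
* `s ≤ 1` and `0 ≤ t`: these are worst at `q = 0`, where they follow from `x ≤ L1max`.
-/

noncomputable section

/-- The constraints that the horizontal segment through `D(ξ)` puts on `x ≤ L1max ξ`. The range of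
`ξ` ensures that the set defining `L1max` is nonempty, so that its supremum is meaningful. -/
lemma le_of_le_L1max {h11 h12 h21 h22 ξ x : ℝ}
    (hpos21 : 0 < h21) (hpos22 : 0 < h22) (hdet : h11 * h22 - h12 * h21 < 0)
    (hξ0 : 0 ≤ ξ) (hξ1 : ξ ≤ 1) (hx : x ≤ L1max h11 h12 h21 h22 ξ) :
    x / 2 * h21 ≤ ξ * (h12 * h21 - h11 * h22) ∧
    x / 2 * h21 ≤ (1 - ξ) * (h12 * h21 - h11 * h22) ∧
    x / 2 * h22 ≤ (1 - ξ) * (h12 * h21 - h11 * h22) := by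
  have hne : { L1 | L1 ≥ 0 ∧
      Rect L1 0 (Dpt h11 h12 h21 h22 ξ) ⊆ Pgram h11 h12 h21 h22 }.Nonempty := by
    refine ⟨0, le_refl _, ?_⟩
    rintro ⟨a, b⟩ ⟨ha, hb⟩
    simp only [Dpt, zero_div, abs_nonpos_iff, sub_eq_zero] at ha hb
    exact ⟨ξ, ⟨hξ0, hξ1⟩, ξ, ⟨hξ0, hξ1⟩, by rw [ha, hb]; ext <;> simp only <;> ring⟩
  have key : ∀ L ∈ { L1 | L1 ≥ 0 ∧
      Rect L1 0 (Dpt h11 h12 h21 h22 ξ) ⊆ Pgram h11 h12 h21 h22 },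
      L / 2 * h21 ≤ ξ * (h12 * h21 - h11 * h22) ∧
      L / 2 * h21 ≤ (1 - ξ) * (h12 * h21 - h11 * h22) ∧
      L / 2 * h22 ≤ (1 - ξ) * (h12 * h21 - h11 * h22) := by
    rintro L ⟨hL0, hL⟩
    have hL0' : (0 : ℝ) ≤ L / 2 := by linarith [hL0.le]
    have hright : (ξ * (h11 + h12) + L / 2, ξ * (h21 + h22)) ∈ Pgram h11 h12 h21 h22 :=
      hL (by simp [Rect, Dpt, abs_of_nonneg hL0'])
    have hleft : (ξ * (h11 + h12) - L / 2, ξ * (h21 + h22)) ∈ Pgram h11 h12 h21 h22 :=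
      hL (by simp [Rect, Dpt, abs_of_nonneg hL0'])
    rw [mem_Pgram_iff hdet] at hright hleft
    obtain ⟨⟨-, -⟩, -, hr⟩ := hright
    obtain ⟨⟨-, hl⟩, hl', -⟩ := hleft
    exact ⟨by linarith, by linarith, by linarith⟩
  have bound : ∀ h c : ℝ, 0 < h → (∀ L ∈ { L1 | L1 ≥ 0 ∧
      Rect L1 0 (Dpt h11 h12 h21 h22 ξ) ⊆ Pgram h11 h12 h21 h22 }, L / 2 * h ≤ c) →
      x / 2 * h ≤ c := by
    intro h c hh H
    have : x ≤ 2 * c / h := hx.trans (csSup_le hne fun L hL => by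
      rw [le_div_iff₀ hh]; linarith [H L hL])
    rw [le_div_iff₀ hh] at this
    linarith
  exact ⟨bound _ _ hpos21 fun L hL => (key L hL).1,
    bound _ _ hpos21 fun L hL => (key L hL).2.1,
    bound _ _ hpos22 fun L hL => (key L hL).2.2⟩

theorem stmt7 (h11 h12 h21 h22 : ℝ)
    (hpos11 : 0 < h11) (hpos12 : 0 < h12) (hpos21 : 0 < h21) (hpos22 : 0 < h22)
    (hdet : h11 * h22 - h12 * h21 < 0)
    (ξ : ℝ) (hξ0 : h12 / (h11 + h12) ≤ ξ) (hξ1 : ξ ≤ 1) :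
    ∀ x, 0 ≤ x → x ≤ L1max h11 h12 h21 h22 ξ →
      IsGreatest
        { L2 | L2 ≥ 0 ∧ RectDown x L2 (Dpt h11 h12 h21 h22 ξ) ⊆ Pgram h11 h12 h21 h22 }
        ((-(1 - ξ) * (h11 * h22 - h12 * h21) - (x / 2) * h21) / h11) := by
  intro x hx0 hx
  have hd : 0 < h12 * h21 - h11 * h22 := by linarith
  have hξ : h12 ≤ ξ * (h11 + h12) := (div_le_iff₀ (by positivity)).1 hξ0
  have hξnn : 0 ≤ ξ := le_trans (by positivity) hξ0
  obtain ⟨b1, b2, b3⟩ := le_of_le_L1max hpos21 hpos22 hdet hξnn hξ1 hx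
  constructor
  · refine ⟨div_nonneg (by linarith) hpos11.le, ?_⟩
    rintro ⟨a, b⟩ ⟨ha, hb1, hb2⟩
    simp only [Dpt] at ha hb1 hb2
    obtain ⟨p, rfl⟩ : ∃ p, a = ξ * (h11 + h12) + p := ⟨a - ξ * (h11 + h12), by ring⟩
    obtain ⟨q, rfl⟩ : ∃ q, b = ξ * (h21 + h22) - q := ⟨ξ * (h21 + h22) - b, by ring⟩
    obtain ⟨hp1, hp2⟩ := abs_le.1 ha
    have hq0 : 0 ≤ q := by linarith
    have hq : q ≤ (-(1 - ξ) * (h11 * h22 - h12 * h21) - (x / 2) * h21) / h11 := by linarith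
    rw [le_div_iff₀ hpos11] at hq
    have hp : p ≤ x / 2 := by linarith
    have hp' : -p ≤ x / 2 := by linarith
    have p21 := mul_le_mul_of_nonneg_right hp hpos21.le
    have p21' := mul_le_mul_of_nonneg_right hp' hpos21.le
    have p22 := mul_le_mul_of_nonneg_right hp hpos22.le
    have p22' := mul_le_mul_of_nonneg_right hp' hpos22.le
    have q11 := mul_nonneg hpos11.le hq0
    have q12 := mul_nonneg hpos12.le hq0
    rw [mem_Pgram_iff hdet]
    refine ⟨⟨?_, by linarith⟩, by linarith, by linarith⟩
    -- The constraint `0 ≤ s`, multiplied by `h11`, is `h12` times the bound on `q`, up to the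
    -- nonnegative slack `d * (ξ * (h11 + h12) - h12 + x / 2)`.
    have hs : h12 * q + h22 * (x / 2) ≤ ξ * (h12 * h21 - h11 * h22) := by
      refine le_of_mul_le_mul_left ?_ hpos11
      have e1 := mul_le_mul_of_nonneg_left hq hpos12.le
      have e2 : 0 ≤ (h12 * h21 - h11 * h22) * (ξ * (h11 + h12) - h12 + x / 2) :=
        mul_nonneg hd.le (by linarith)
      linarith
    linarith
  · rintro L ⟨hL0, hL⟩
    have hL0' : (0 : ℝ) ≤ L := hL0
    have hx2 : 0 ≤ x / 2 := by linarith
    have hcorner : (ξ * (h11 + h12) + x / 2, ξ * (h21 + h22) - L) ∈ Pgram h11 h12 h21 h22 :=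
      hL (by simp [RectDown, Dpt, abs_of_nonneg hx2, hL0'])
    rw [mem_Pgram_iff hdet] at hcorner
    rw [le_div_iff₀ hpos11]
    linarith [hcorner.2.2]
end
end

section
/- For every ξ ∈ [0,1] and every x with 0 ≤ x ≤ L1max(ξ), L2(ξ, x) = L2(1 − ξ, x). (Lemma 3: the maximal vertical rectangle length is symmetric about ξ = 1/2.) -/
/-!
The parallelogram `P` is invariant under the point reflection `v ↦ (h11 + h12, h21 + h22) - v`
through its centre. This reflection swaps `D(ξ)` and `D(1 - ξ)` and preserves axis-aligned
rectangles with their side lengths, so the sets of admissible vertical lengths at `ξ` and `1 - ξ`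
coincide (`Rect_subset_reflect`), and hence so do their suprema.
-/

noncomputable section

/-- The point reflection of `P` through its centre carries parameters `(s, t)` to
`(1 - s, 1 - t)`. -/
lemma Pgram_reflect {h11 h12 h21 h22 : ℝ} {v : ℝ × ℝ} (hv : v ∈ Pgram h11 h12 h21 h22) :
    (h11 + h12 - v.1, h21 + h22 - v.2) ∈ Pgram h11 h12 h21 h22 := by
  obtain ⟨s, hs, t, ht, rfl⟩ := hv
  refine ⟨1 - s, ⟨by linarith [hs.2], by linarith [hs.1]⟩,
    1 - t, ⟨by linarith [ht.2], by linarith [ht.1]⟩, ?_⟩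
  ext <;> simp only <;> ring

lemma Rect_subset_reflect {h11 h12 h21 h22 ξ x L : ℝ}
    (h : Rect x L (Dpt h11 h12 h21 h22 ξ) ⊆ Pgram h11 h12 h21 h22) :
    Rect x L (Dpt h11 h12 h21 h22 (1 - ξ)) ⊆ Pgram h11 h12 h21 h22 := by
  rintro ⟨a, b⟩ ⟨ha, hb⟩
  have hmem : (h11 + h12 - a, h21 + h22 - b) ∈ Rect x L (Dpt h11 h12 h21 h22 ξ) := by
    simp only [Rect, Dpt, Set.mem_setOf_eq] at ha hb ⊢
    rw [abs_sub_comm] at ha hb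
    constructor
    · convert ha using 2
      ring
    · convert hb using 2
      ring
  simpa using Pgram_reflect (h hmem)

theorem stmt10 (h11 h12 h21 h22 : ℝ)
    (hpos11 : 0 < h11) (hpos12 : 0 < h12) (hpos21 : 0 < h21) (hpos22 : 0 < h22)
    (hdet : h11 * h22 - h12 * h21 < 0) :
    ∀ ξ ∈ Set.Icc (0:ℝ) 1, ∀ x, 0 ≤ x → x ≤ L1max h11 h12 h21 h22 ξ →
      L2fun h11 h12 h21 h22 ξ x = L2fun h11 h12 h21 h22 (1 - ξ) x := by
  intro ξ _ x _ _
  unfold L2fun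
  congr 1
  ext L
  refine and_congr_right fun _ => ⟨Rect_subset_reflect, fun h => ?_⟩
  simpa using Rect_subset_reflect h
end
end

section
/- For every ξ ∈ [0,1] and all L1, L2 ≥ 0: if Rect(L1, L2, D(ξ)) ⊆ P, then Rect(L1, L2, D(1/2)) ⊆ P. (Geometric core of Theorem 1: any axis-aligned rectangle that fits inside the parallelogram P centered at the diagonal point D(ξ) also fits when recentered at the diagonal midpoint D(1/2).) -/
/-!
The parallelogram `P` is convex and invariant under the point reflection `v ↦ D(1) - v` in its
centre `D(1/2)`. Let `D(1/2) + w` be a point of the recentred rectangle. The rectangle at `D(ξ)`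
is symmetric about its own centre, so `D(ξ) + w` and `D(ξ) - w` both lie in `P`; reflecting the
latter, `D(1 - ξ) + w` lies in `P`, and `D(1/2) + w` is the midpoint of it and `D(ξ) + w`.
In the coordinates `(s, t)` of `P` the reflection is `(s, t) ↦ (1 - s, 1 - t)`.
-/

noncomputable section

theorem stmt14 (h11 h12 h21 h22 : ℝ)
    (hpos11 : 0 < h11) (hpos12 : 0 < h12) (hpos21 : 0 < h21) (hpos22 : 0 < h22)
    (hdet : h11 * h22 - h12 * h21 < 0) :
    ∀ ξ ∈ Set.Icc (0:ℝ) 1, ∀ L1 L2 : ℝ, 0 ≤ L1 → 0 ≤ L2 →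
      Rect L1 L2 (Dpt h11 h12 h21 h22 ξ) ⊆ Pgram h11 h12 h21 h22 →
      Rect L1 L2 (Dpt h11 h12 h21 h22 (1 / 2)) ⊆ Pgram h11 h12 h21 h22 := by
  rintro ξ - L1 L2 - - hsub ⟨x, y⟩ ⟨hx, hy⟩
  simp only [Dpt] at hx hy
  -- With `w = (x, y) - D(1/2)`, the points used are `D(ξ) + w` and `D(ξ) - w`.
  have hplus := @hsub
    (ξ * (h11 + h12) + (x - 1 / 2 * (h11 + h12)), ξ * (h21 + h22) + (y - 1 / 2 * (h21 + h22)))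
    ⟨by simpa only [Dpt, add_sub_cancel_left] using hx,
      by simpa only [Dpt, add_sub_cancel_left] using hy⟩
  have hminus := @hsub
    (ξ * (h11 + h12) - (x - 1 / 2 * (h11 + h12)), ξ * (h21 + h22) - (y - 1 / 2 * (h21 + h22)))
    ⟨by simpa only [Dpt, sub_sub_cancel_left, abs_neg] using hx,
      by simpa only [Dpt, sub_sub_cancel_left, abs_neg] using hy⟩
  obtain ⟨s, ⟨hs0, hs1⟩, t, ⟨ht0, ht1⟩, hst⟩ := hplus
  obtain ⟨u, ⟨hu0, hu1⟩, v, ⟨hv0, hv1⟩, huv⟩ := hminus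
  rw [Prod.mk.injEq] at hst huv
  -- Parameters of the midpoint of `D(ξ) + w` and the reflection of `D(ξ) - w`.
  refine ⟨(s + (1 - u)) / 2, ⟨by linarith, by linarith⟩,
    (t + (1 - v)) / 2, ⟨by linarith, by linarith⟩, Prod.ext ?_ ?_⟩
  · linear_combination (hst.1 - huv.1) / 2
  · linear_combination (hst.2 - huv.2) / 2
end
end

section
/- For every function C : ℝ → ℝ and every ξ ∈ [0,1], the rate region R_ZF(ξ) := { (C L1, C L2) : L1 ≥ 0, L2 ≥ 0, Rect(L1, L2, D(ξ)) ⊆ P } satisfies R_ZF(ξ) ⊆ R_ZF(1/2): the achievable rate region of the zero-forcing precoder at any dimming target ξ is contained in the rate region at dimming target 1/2. (Theorem 1) -/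
/-!
The parallelogram `P` is convex and centrally symmetric about `D(1/2)`. If a rectangle centred at
`D(ξ)` lies in `P`, then for every displacement `d` in that rectangle both `D(ξ) + d` and
`D(ξ) - d` lie in `P`. Reflecting the latter in `D(1/2)` gives `2 D(1/2) - D(ξ) + d ∈ P`, and its
midpoint with `D(ξ) + d` is `D(1/2) + d`. So the translate of the rectangle to `D(1/2)`, with the
same side lengths, also lies in `P`, and the same rate pair is achieved there.
-/

noncomputable section

/-- The zero-forcing rate region at dimming target `ξ` for capacity function `C`. -/
def RZF (h11 h12 h21 h22 : ℝ) (C : ℝ → ℝ) (ξ : ℝ) : Set (ℝ × ℝ) :=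
  { p | ∃ L1 L2 : ℝ, L1 ≥ 0 ∧ L2 ≥ 0 ∧
      Rect L1 L2 (Dpt h11 h12 h21 h22 ξ) ⊆ Pgram h11 h12 h21 h22 ∧
      p = (C L1, C L2) }

theorem stmt15 (h11 h12 h21 h22 : ℝ)
    (hpos11 : 0 < h11) (hpos12 : 0 < h12) (hpos21 : 0 < h21) (hpos22 : 0 < h22)
    (hdet : h11 * h22 - h12 * h21 < 0) :
    ∀ C : ℝ → ℝ, ∀ ξ ∈ Set.Icc (0:ℝ) 1,
      RZF h11 h12 h21 h22 C ξ ⊆ RZF h11 h12 h21 h22 C (1 / 2) := by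
  rintro C ξ - p ⟨L1, L2, hL1, hL2, hsub, rfl⟩
  refine ⟨L1, L2, hL1, hL2, ?_, rfl⟩
  rintro ⟨x, y⟩ ⟨hx, hy⟩
  simp only [Dpt] at hx hy
  -- With `d = (x, y) - D(1/2)`, both `D(ξ) + d` and `D(ξ) - d` lie in the rectangle at `D(ξ)`.
  have hplus : (ξ * (h11 + h12) + (x - 1 / 2 * (h11 + h12)),
      ξ * (h21 + h22) + (y - 1 / 2 * (h21 + h22))) ∈ Pgram h11 h12 h21 h22 := by
    apply hsub
    simpa only [Rect, Dpt, Set.mem_ofPred_eq, add_sub_cancel_left] using And.intro hx hy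
  have hminus : (ξ * (h11 + h12) - (x - 1 / 2 * (h11 + h12)),
      ξ * (h21 + h22) - (y - 1 / 2 * (h21 + h22))) ∈ Pgram h11 h12 h21 h22 := by
    apply hsub
    simpa only [Rect, Dpt, Set.mem_ofPred_eq, sub_sub_cancel_left, abs_neg] using And.intro hx hy
  obtain ⟨s₁, ⟨hs₁, hs₁'⟩, t₁, ⟨ht₁, ht₁'⟩, h₁⟩ := hplus
  obtain ⟨s₂, ⟨hs₂, hs₂'⟩, t₂, ⟨ht₂, ht₂'⟩, h₂⟩ := hminus
  rw [Prod.mk.injEq] at h₁ h₂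
  -- The reflection of `D(ξ) - d` in the centre has parameters `(1 - s₂, 1 - t₂)`;
  -- average them with `(s₁, t₁)`.
  refine ⟨(s₁ + (1 - s₂)) / 2, ⟨by linarith, by linarith⟩,
    (t₁ + (1 - t₂)) / 2, ⟨by linarith, by linarith⟩, ?_⟩
  rw [Prod.mk.injEq]
  constructor
  · linarith [h₁.1, h₂.1]
  · linarith [h₁.2, h₂.2]
end
end
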